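/- Let n ≥ 2, let κ ∈ ℝⁿ lie in the Gårding cone Γ₂, and let μ ∈ ℝⁿ be arbitrary. Then σ_{1,1}(κ, μ)² ≥ σ₂(κ) · σ₂(μ); equivalently, the quadratic polynomial t ↦ σ₂(μ + tκ) has only real roots (σ₂ is hyperbolic with respect to every direction in Γ₂). -/

import Mathlib

open Finset

/-- First elementary symmetric polynomial: σ₁(κ) = ∑ i, κ i. -/
noncomputable def sigma1 {n : ℕ} (κ : Fin n → ℝ) : ℝ := ∑ i, κ i

/-- Second elementary symmetric polynomial: σ₂(κ) = ∑_{i<j} κ i * κ j. -/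
noncomputable def sigma2 {n : ℕ} (κ : Fin n → ℝ) : ℝ :=
  ∑ p ∈ Finset.univ.filter (fun p : Fin n × Fin n => p.1 < p.2), κ p.1 * κ p.2

/-- Polarization of σ₂: σ_{1,1}(κ, μ) = (1/2)(σ₁(κ)σ₁(μ) − ∑ i, κ i * μ i). -/
noncomputable def sigma11 {n : ℕ} (κ μ : Fin n → ℝ) : ℝ :=
  (1 / 2) * (sigma1 κ * sigma1 μ - ∑ i, κ i * μ i)

theorem sigma2_aux {n : ℕ} (κ : Fin n → ℝ) :
    2 * sigma2 κ = sigma1 κ ^ 2 - ∑ i, κ i ^ 2 := by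
  have h1 : sigma1 κ ^ 2 = ∑ i, ∑ j, κ i * κ j := by
    rw [sigma1, sq, Finset.sum_mul_sum]
  have h2 : sigma2 κ = ∑ i, ∑ j, if i < j then κ i * κ j else 0 := by
    rw [sigma2, Finset.sum_filter, Fintype.sum_prod_type]
  have h3 : sigma2 κ = ∑ i, ∑ j, if j < i then κ i * κ j else 0 := by
    rw [h2, Finset.sum_comm]
    simp only [mul_comm]
  have h4 : ∑ i, κ i ^ 2 = ∑ i, ∑ j, if i = j then κ i * κ j else 0 := by
    simp [sq]
  have h5 : sigma1 κ ^ 2 = sigma2 κ + sigma2 κ + ∑ i, κ i ^ 2 := by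
    rw [h1, h4]
    nth_rw 1 [h2]
    rw [h3]
    simp only [← Finset.sum_add_distrib]
    refine Finset.sum_congr rfl fun i _ => Finset.sum_congr rfl fun j _ => ?_
    rcases lt_trichotomy i j with h | h | h
    · simp [h, h.ne, h.not_gt]
    · simp [h]
    · simp [h, h.ne', h.not_gt]
  linarith

/-- Hyperbolicity of σ₂ in directions of Γ₂: for κ ∈ Γ₂ and arbitrary μ,
    σ_{1,1}(κ, μ)² ≥ σ₂(κ)·σ₂(μ). -/
theorem sigma2_hyperbolic {n : ℕ} (hn : 2 ≤ n) (κ μ : Fin n → ℝ)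
    (hκ1 : sigma1 κ > 0) (hκ2 : sigma2 κ > 0) :
    sigma11 κ μ ^ 2 ≥ sigma2 κ * sigma2 μ := by
  have e1 := sigma2_aux κ
  have e2 := sigma2_aux μ
  have hC : (∑ i, κ i * μ i) ^ 2 ≤ (∑ i, κ i ^ 2) * ∑ i, μ i ^ 2 :=
    Finset.sum_mul_sq_le_sq_mul_sq _ _ _
  have hA : 0 ≤ ∑ i, κ i ^ 2 := Finset.sum_nonneg fun i _ => sq_nonneg _
  have hE : 0 ≤ ∑ i, (sigma1 κ * μ i - sigma1 μ * κ i) ^ 2 :=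
    Finset.sum_nonneg fun i _ => sq_nonneg _
  have hE2 : ∑ i, (sigma1 κ * μ i - sigma1 μ * κ i) ^ 2 =
      sigma1 κ ^ 2 * ∑ i, μ i ^ 2 - 2 * sigma1 κ * sigma1 μ * ∑ i, κ i * μ i
        + sigma1 μ ^ 2 * ∑ i, κ i ^ 2 := by
    simp only [Finset.mul_sum, ← Finset.sum_add_distrib, ← Finset.sum_sub_distrib]
    exact Finset.sum_congr rfl fun i _ => by ring
  rw [hE2] at hE
  have e3 : 2 * sigma11 κ μ = sigma1 κ * sigma1 μ - ∑ i, κ i * μ i := by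
    rw [sigma11]; ring
  clear hE2
  generalize ∑ i, κ i * μ i = C at *
  generalize ∑ i, κ i ^ 2 = A at *
  generalize ∑ i, μ i ^ 2 = B at *
  generalize sigma1 κ = a at *
  generalize sigma1 μ = b at *
  have key : A * B - C ^ 2 ≤ a ^ 2 * B - 2 * a * b * C + b ^ 2 * A := by
    rcases hA.eq_or_lt with h | h
    · subst h
      nlinarith [sq_nonneg C]
    · refine le_of_mul_le_mul_left ?_ h
      have : 0 ≤ (a ^ 2 - A) * (A * B - C ^ 2) :=
        mul_nonneg (by linarith) (by linarith)
      nlinarith [sq_nonneg (b * A - a * C)]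
  have : (2 * sigma11 κ μ) ^ 2 ≥ (2 * sigma2 κ) * (2 * sigma2 μ) := by
    rw [e1, e2, e3]
    nlinarith
  nlinarith
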